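/- Let K ≥ 1 and n ≥ 1 be integers, let μ > 0 be a real number, and let φ : ℝ → ℝ satisfy φ(x) ≤ 𝟙{x > 0} for every real x (where 𝟙{x > 0} equals 1 if x > 0 and 0 otherwise). For each i ∈ {1,…,n} let z⁽ⁱ⁾ ∈ ℝ^K be a vector of scores and y_i ∈ {1,…,K} a label, and set F⁽ⁱ⁾_j = z⁽ⁱ⁾_j − z⁽ⁱ⁾_{y_i} for each j ∈ {1,…,K}. Then (1/n) ∑_{i=1}^n 𝟙{ max_{j∈{1,…,K}} F⁽ⁱ⁾_j > 0 } ≥ (1/n) ∑_{i=1}^n (1/μ) log( ∑_{j=1}^K exp(μ φ(F⁽ⁱ⁾_j)) ) − (1/μ) log K. -/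

import Mathlib

/-- Lemma 3.1 of the paper: if `φ` is a pointwise lower bound of the 0-1 step
function `𝟙{x > 0}`, then the empirical 0-1 loss
`(1/n) ∑ᵢ 𝟙{max_j (zᵢⱼ − zᵢ_{yᵢ}) > 0}` is lower bounded by
`(1/n) ∑ᵢ (1/μ) log(∑_j exp(μ φ(zᵢⱼ − zᵢ_{yᵢ}))) − (1/μ) log K`. -/
theorem empirical_zero_one_loss_ge_logsumexp_lower_bound
    (K n : ℕ) (hK : 1 ≤ K) (hn : 1 ≤ n) (μ : ℝ) (hμ : 0 < μ)
    (φ : ℝ → ℝ) (hφ : ∀ x : ℝ, φ x ≤ if 0 < x then (1 : ℝ) else 0)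
    (z : Fin n → Fin K → ℝ) (y : Fin n → Fin K) :
    (1 / (n : ℝ)) * ∑ i : Fin n,
        (if 0 < Finset.univ.sup' (Finset.univ_nonempty_iff.mpr ⟨⟨0, hK⟩⟩)
              (fun j => z i j - z i (y i))
          then (1 : ℝ) else 0) ≥
      (1 / (n : ℝ)) * ∑ i : Fin n,
          (1 / μ) * Real.log (∑ j : Fin K, Real.exp (μ * φ (z i j - z i (y i)))) -
        (1 / μ) * Real.log K := by
  have hn' : (0 : ℝ) < n := by exact_mod_cast hn
  have hK' : (0 : ℝ) < K := by exact_mod_cast hK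
  haveI : Nonempty (Fin K) := ⟨⟨0, hK⟩⟩
  have key : ∀ i : Fin n,
      (1 / μ) * Real.log (∑ j : Fin K, Real.exp (μ * φ (z i j - z i (y i)))) ≤
      (if 0 < Finset.univ.sup' (Finset.univ_nonempty_iff.mpr ⟨⟨0, hK⟩⟩)
              (fun j => z i j - z i (y i))
          then (1 : ℝ) else 0) + (1 / μ) * Real.log K := by
    intro i
    set L : ℝ := (if 0 < Finset.univ.sup' (Finset.univ_nonempty_iff.mpr ⟨⟨0, hK⟩⟩)
              (fun j => z i j - z i (y i))
          then (1 : ℝ) else 0) with hL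
    have hle : ∀ j : Fin K, φ (z i j - z i (y i)) ≤ L := by
      intro j
      refine (hφ _).trans ?_
      rw [hL]
      have hj := Finset.le_sup' (fun j => z i j - z i (y i)) (Finset.mem_univ j)
      by_cases h : 0 < z i j - z i (y i)
      · rw [if_pos h, if_pos (lt_of_lt_of_le h hj)]
      · rw [if_neg h]
        split_ifs <;> norm_num
    have hsum : ∑ j : Fin K, Real.exp (μ * φ (z i j - z i (y i))) ≤ K * Real.exp (μ * L) := by
      calc _ ≤ ∑ _j : Fin K, Real.exp (μ * L) :=
            Finset.sum_le_sum fun j _ =>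
              Real.exp_le_exp.mpr (mul_le_mul_of_nonneg_left (hle j) hμ.le)
        _ = _ := by simp
    have hpos : 0 < ∑ j : Fin K, Real.exp (μ * φ (z i j - z i (y i))) :=
      Finset.sum_pos (fun j _ => Real.exp_pos _) Finset.univ_nonempty
    have hlog := Real.log_le_log hpos hsum
    rw [Real.log_mul hK'.ne' (Real.exp_pos _).ne', Real.log_exp] at hlog
    calc _ ≤ (1 / μ) * (Real.log K + μ * L) :=
          mul_le_mul_of_nonneg_left hlog (by positivity)
      _ = _ := by field_simp; ring
  have h := Finset.sum_le_sum fun i (_ : i ∈ (Finset.univ : Finset (Fin n))) => key i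
  rw [Finset.sum_add_distrib, Finset.sum_const, Finset.card_univ, Fintype.card_fin,
    nsmul_eq_mul] at h
  have h2 := mul_le_mul_of_nonneg_left h (show (0 : ℝ) ≤ 1 / (n : ℝ) by positivity)
  rw [mul_add, ← mul_assoc (1 / (n : ℝ)) (n : ℝ), one_div_mul_cancel hn'.ne', one_mul] at h2
  rw [ge_iff_le, sub_le_iff_le_add]
  exact h2
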